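/- Let q ∈ L¹[0,1] be a real-valued integrable function and let t ∈ [0,2π) be fixed. Suppose that every eigenvalue λ of the quasi-periodic problem L_t(q) satisfies λ ≥ min{t², (2π−t)²}, and that for every n ∈ ℕ (n ≥ 1) the number (2nπ + t)² is an eigenvalue of L_t(q). Then q = 0 almost everywhere on [0,1]. -/

import Mathlib

open MeasureTheory Set

/-- `IsQPEigenpair q t lam y g h` says that `y` (with first derivative `g` and
second derivative `h`) is an eigenfunction of the quasi-periodic problem
`L_t(q)` on `[0,1]` with eigenvalue `lam`: `y` is nonzero, continuously
differentiable on `[0,1]` with derivative `g`, `g` is absolutely continuous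
with a.e. derivative `h` (encoded via the fundamental theorem of calculus with
`h` integrable), the equation `-y'' + q y = lam y` holds a.e. on `[0,1]`, and
the quasi-periodic boundary conditions hold. -/
def IsQPEigenpair (q : ℝ → ℝ) (t : ℝ) (lam : ℂ) (y g h : ℝ → ℂ) : Prop :=
  (∃ x ∈ Icc (0:ℝ) 1, y x ≠ 0) ∧
  (∀ x ∈ Icc (0:ℝ) 1, HasDerivWithinAt y (g x) (Icc (0:ℝ) 1) x) ∧
  ContinuousOn g (Icc (0:ℝ) 1) ∧
  IntegrableOn h (Icc (0:ℝ) 1) ∧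
  (∀ x ∈ Icc (0:ℝ) 1, g x = g 0 + ∫ s in (0:ℝ)..x, h s) ∧
  (∀ᵐ x ∂(volume.restrict (Icc (0:ℝ) 1)), -h x + (q x : ℂ) * y x = lam * y x) ∧
  y 1 = Complex.exp (Complex.I * t) * y 0 ∧
  g 1 = Complex.exp (Complex.I * t) * g 0

/-- `lam` is an eigenvalue of the quasi-periodic problem `L_t(q)`. -/
def IsQPEigenvalue (q : ℝ → ℝ) (t : ℝ) (lam : ℂ) : Prop :=
  ∃ y g h : ℝ → ℂ, IsQPEigenpair q t lam y g h

open Filter Topology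

/-- Primitives of integrable functions on `[0,1]` are continuous there. -/
lemma continuousOn_primitive_unit {f : ℝ → ℂ} (hf : IntegrableOn f (Icc (0:ℝ) 1)) (a : ℂ) :
    ContinuousOn (fun x => a + ∫ s in (0:ℝ)..x, f s) (Icc (0:ℝ) 1) := by
  have := intervalIntegral.continuousOn_primitive_interval (a := (0:ℝ)) (b := 1) (f := f)
    (μ := volume) (by rwa [uIcc_of_le zero_le_one])
  rw [uIcc_of_le zero_le_one] at this
  exact continuousOn_const.add this

lemma intervalIntegrable_of_mem_unit {f : ℝ → ℂ} (hf : IntegrableOn f (Icc (0:ℝ) 1)) {x : ℝ}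
    (hx : x ∈ Icc (0:ℝ) 1) : IntervalIntegrable f volume 0 x := by
  rw [intervalIntegrable_iff_integrableOn_Icc_of_le hx.1]
  exact hf.mono_set (Icc_subset_Icc_right hx.2)

lemma intervalIntegral_unit_eq {E : Type*} [NormedAddCommGroup E] [NormedSpace ℝ E] (f : ℝ → E) :
    ∫ s in (0:ℝ)..1, f s = ∫ s in Icc (0:ℝ) 1, f s := by
  rw [intervalIntegral.integral_of_le zero_le_one, integral_Icc_eq_integral_Ioc]

lemma integrableOn_mul_continuousOn_unit {f g : ℝ → ℂ} (hf : IntegrableOn f (Icc (0:ℝ) 1))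
    (hg : ContinuousOn g (Icc (0:ℝ) 1)) : IntegrableOn (fun x => f x * g x) (Icc (0:ℝ) 1) :=
  hf.mul_continuousOn hg isCompact_Icc

/-- Integration by parts for primitives of integrable functions vanishing at the left endpoint. -/
lemma integral_mul_primitive_add {f g : ℝ → ℂ} {b : ℝ} (hb : 0 ≤ b)
    (hf : IntegrableOn f (Icc (0:ℝ) b)) (hg : IntegrableOn g (Icc (0:ℝ) b)) :
    (∫ x in Icc (0:ℝ) b, f x * ∫ s in (0:ℝ)..x, g s) +
      (∫ x in Icc (0:ℝ) b, (∫ s in (0:ℝ)..x, f s) * g x) =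
      (∫ s in (0:ℝ)..b, f s) * (∫ s in (0:ℝ)..b, g s) := by
  set μ : Measure ℝ := volume.restrict (Icc (0:ℝ) b) with hμ
  have hprod : Integrable (fun z : ℝ × ℝ => f z.1 * g z.2) (μ.prod μ) := hf.mul_prod hg
  have hS : MeasurableSet {z : ℝ × ℝ | z.2 ≤ z.1} := measurableSet_le measurable_snd measurable_fst
  have hsum := integral_add_compl hS hprod
  rw [integral_prod_mul, ← integral_indicator hS, ← integral_indicator hS.compl,
    integral_prod _ (hprod.indicator hS), integral_prod_symm _ (hprod.indicator hS.compl)] at hsum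
  rw [intervalIntegral.integral_of_le hb, intervalIntegral.integral_of_le hb,
    ← integral_Icc_eq_integral_Ioc, ← integral_Icc_eq_integral_Ioc, ← hμ, ← hsum]
  congr 1
  · refine setIntegral_congr_fun measurableSet_Icc fun x hx => ?_
    have : ∀ y, ({z : ℝ × ℝ | z.2 ≤ z.1}.indicator (fun z : ℝ × ℝ => f z.1 * g z.2)) (x, y)
        = f x * (Iic x).indicator g y := by
      intro y
      by_cases h : y ≤ x <;> simp [indicator, h]
    simp only [this]
    rw [integral_const_mul, integral_indicator measurableSet_Iic, hμ,
      Measure.restrict_restrict measurableSet_Iic,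
      intervalIntegral.integral_of_le hx.1, ← integral_Icc_eq_integral_Ioc]
    congr 3
    ext y
    simp only [mem_Icc, mem_inter_iff, mem_Iic]
    constructor
    · rintro ⟨h1, h2⟩; exact ⟨h2, h1, h2.trans hx.2⟩
    · rintro ⟨h1, h2, h3⟩; exact ⟨h2, h1⟩
  · refine setIntegral_congr_fun measurableSet_Icc fun x hx => ?_
    have : ∀ y, ({z : ℝ × ℝ | z.2 ≤ z.1}ᶜ.indicator (fun z : ℝ × ℝ => f z.1 * g z.2)) (y, x)
        = (Iio x).indicator f y * g x := by
      intro y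
      by_cases h : y < x
      · simp [indicator, h]
      · simp [indicator, h]
    simp only [this]
    rw [integral_mul_const, integral_indicator measurableSet_Iio, hμ,
      Measure.restrict_restrict measurableSet_Iio,
      intervalIntegral.integral_of_le hx.1, ← integral_Icc_eq_integral_Ioc,
      integral_Icc_eq_integral_Ico]
    congr 3
    ext y
    simp only [mem_Ico, mem_Icc, mem_inter_iff, mem_Iio]
    constructor
    · rintro ⟨h1, h2⟩; exact ⟨h2, h1, h2.le.trans hx.2⟩
    · rintro ⟨h1, h2, h3⟩; exact ⟨h2, h1⟩

/-- Integration by parts on `[0,b]` for absolutely continuous functions given as primitives. -/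
lemma integral_parts_of_primitive {F G f g : ℝ → ℂ} {b : ℝ} (hb : 0 ≤ b)
    (hf : IntegrableOn f (Icc (0:ℝ) b)) (hg : IntegrableOn g (Icc (0:ℝ) b))
    (hF : ∀ x ∈ Icc (0:ℝ) b, F x = F 0 + ∫ s in (0:ℝ)..x, f s)
    (hG : ∀ x ∈ Icc (0:ℝ) b, G x = G 0 + ∫ s in (0:ℝ)..x, g s) :
    (∫ x in Icc (0:ℝ) b, f x * G x) + (∫ x in Icc (0:ℝ) b, F x * g x) =
      F b * G b - F 0 * G 0 := by
  have hprim : ∀ {k : ℝ → ℂ}, IntegrableOn k (Icc (0:ℝ) b) →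
      ContinuousOn (fun x => ∫ s in (0:ℝ)..x, k s) (Icc (0:ℝ) b) := by
    intro k hk
    have := intervalIntegral.continuousOn_primitive_interval (a := (0:ℝ)) (b := b) (f := k)
      (μ := volume) (by rwa [uIcc_of_le hb])
    rwa [uIcc_of_le hb] at this
  have key := integral_mul_primitive_add hb hf hg
  have h1 : (∫ x in Icc (0:ℝ) b, f x * G x) = (∫ x in Icc (0:ℝ) b, f x) * G 0 +
      ∫ x in Icc (0:ℝ) b, f x * ∫ s in (0:ℝ)..x, g s := by
    rw [← integral_mul_const, ← integral_add (hf.mul_const _)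
      (hf.mul_continuousOn (hprim hg) isCompact_Icc)]
    refine setIntegral_congr_fun measurableSet_Icc fun x hx => ?_
    simp only [hG x hx]; ring
  have h2 : (∫ x in Icc (0:ℝ) b, F x * g x) = F 0 * (∫ x in Icc (0:ℝ) b, g x) +
      ∫ x in Icc (0:ℝ) b, (∫ s in (0:ℝ)..x, f s) * g x := by
    rw [← integral_const_mul, ← integral_add (hg.const_mul _)
      (hg.continuousOn_mul (hprim hf) isCompact_Icc)]
    refine setIntegral_congr_fun measurableSet_Icc fun x hx => ?_
    simp only [hF x hx]; ring
  rw [h1, h2, hF b ⟨hb, le_rfl⟩, hG b ⟨hb, le_rfl⟩]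
  rw [intervalIntegral.integral_of_le hb, intervalIntegral.integral_of_le hb,
    ← integral_Icc_eq_integral_Ioc, ← integral_Icc_eq_integral_Ioc] at key ⊢
  linear_combination key

/-- Riemann–Lebesgue lemma on the unit interval. -/
lemma tendsto_fourier_unit {q : ℝ → ℝ} :
    Tendsto (fun ν : ℝ => ∫ x in Icc (0:ℝ) 1, (q x : ℂ) * Complex.exp (-(Complex.I * ν * x)))
      (cocompact ℝ) (𝓝 0) := by
  have h := Real.tendsto_integral_exp_smul_cocompact ((Icc (0:ℝ) 1).indicator fun x => (q x : ℂ))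
  have hc : Tendsto (fun ν : ℝ => ν * (2 * Real.pi)⁻¹) (cocompact ℝ) (cocompact ℝ) :=
    (Homeomorph.mulRight₀ _ (by positivity)).isClosedEmbedding.tendsto_cocompact
  refine (h.comp hc).congr fun ν => ?_
  simp only [Function.comp]
  rw [← integral_indicator measurableSet_Icc]
  congr 1 with x
  by_cases hx : x ∈ Icc (0:ℝ) 1
  · simp only [indicator_of_mem hx, Circle.smul_def, Real.fourierChar_apply, smul_eq_mul]
    rw [mul_comm]
    congr 2
    push_cast
    have : (Real.pi : ℂ) ≠ 0 := by exact_mod_cast Real.pi_ne_zero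
    field_simp
  · simp [indicator_of_notMem hx]

lemma eq_add_integral_of_hasDerivWithinAt_unit {y g : ℝ → ℂ}
    (hy : ∀ x ∈ Icc (0:ℝ) 1, HasDerivWithinAt y (g x) (Icc (0:ℝ) 1) x)
    (hg : ContinuousOn g (Icc (0:ℝ) 1)) {x : ℝ} (hx : x ∈ Icc (0:ℝ) 1) :
    y x = y 0 + ∫ s in (0:ℝ)..x, g s := by
  have hsub : Icc (0:ℝ) x ⊆ Icc 0 1 := Icc_subset_Icc_right hx.2
  rw [intervalIntegral.integral_eq_sub_of_hasDeriv_right_of_le hx.1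
    (fun s hs => ((hy s (hsub hs)).continuousWithinAt).mono hsub)
    (fun s hs => ?_) ((hg.mono hsub).intervalIntegrable_of_Icc hx.1)]
  · ring
  · have h1 : Icc (0:ℝ) 1 ∈ 𝓝 s := Icc_mem_nhds hs.1 (hs.2.trans_le hx.2)
    exact ((hy s (mem_of_mem_nhds h1)).hasDerivAt h1).hasDerivWithinAt

/-- The amplitude `(y' + iνy) e^{-iνx}` of an eigenfunction for the eigenvalue `ν²` varies by
an oscillatory integral of the potential. -/
lemma amplitude_eq {q : ℝ → ℝ} {t ν : ℝ} {y g h : ℝ → ℂ}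
    (hyp : IsQPEigenpair q t ((ν ^ 2 : ℝ) : ℂ) y g h) {b : ℝ} (hb : b ∈ Icc (0:ℝ) 1) :
    (g b + Complex.I * ν * y b) * Complex.exp (-(Complex.I * ν * b)) =
      (g 0 + Complex.I * ν * y 0) +
        ∫ s in Icc (0:ℝ) b, (q s : ℂ) * y s * Complex.exp (-(Complex.I * ν * s)) := by
  obtain ⟨-, hy, hg, hh, hgh, heq, -, -⟩ := hyp
  have hsub : Icc (0:ℝ) b ⊆ Icc 0 1 := Icc_subset_Icc_right hb.2
  have hgb : IntegrableOn g (Icc (0:ℝ) b) := (hg.mono hsub).integrableOn_Icc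
  have hhb : IntegrableOn h (Icc (0:ℝ) b) := hh.mono_set hsub
  have hycont : ContinuousOn y (Icc (0:ℝ) b) :=
    fun s hs => ((hy s (hsub hs)).continuousWithinAt).mono hsub
  have hEd : ∀ x : ℝ, HasDerivAt (fun x : ℝ => Complex.exp (-(Complex.I * ν * x)))
      (-(Complex.I * ν) * Complex.exp (-(Complex.I * ν * x))) x := by
    intro x
    have h1 : HasDerivAt (fun x : ℝ => -(Complex.I * ν * (x : ℂ))) (-(Complex.I * ν)) x := by
      have h2 := ((Complex.ofRealCLM.hasDerivAt (x := x)).const_mul (Complex.I * ν)).neg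
      simp only [Complex.ofRealCLM_apply, Complex.ofReal_one, mul_one] at h2
      exact h2
    simpa [mul_comm] using h1.cexp
  have hEc : Continuous fun x : ℝ => Complex.exp (-(Complex.I * ν * x)) := by fun_prop
  have hparts := integral_parts_of_primitive
    (F := fun x => g x + Complex.I * ν * y x) (f := fun x => h x + Complex.I * ν * g x)
    (G := fun x : ℝ => Complex.exp (-(Complex.I * ν * x)))
    (g := fun x : ℝ => -(Complex.I * ν) * Complex.exp (-(Complex.I * ν * x))) hb.1
    (hhb.add (hgb.const_mul _)) ((by fun_prop : Continuous _).integrableOn_Icc)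
    (fun x hx => by
      have hxs := hsub hx
      rw [intervalIntegral.integral_add (intervalIntegrable_of_mem_unit hh hxs)
        ((intervalIntegrable_of_mem_unit hg.integrableOn_Icc hxs).const_mul _),
        intervalIntegral.integral_const_mul, hgh x hxs,
        eq_add_integral_of_hasDerivWithinAt_unit hy hg hxs]
      ring)
    (fun x hx => by
      rw [intervalIntegral.integral_eq_sub_of_hasDerivAt (fun s _ => hEd s)
        ((by fun_prop : Continuous _).intervalIntegrable _ _)]
      ring)
  have hint : (∫ s in Icc (0:ℝ) b, (q s : ℂ) * y s * Complex.exp (-(Complex.I * ν * s))) =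
      (∫ x in Icc (0:ℝ) b, (h x + Complex.I * ν * g x) * Complex.exp (-(Complex.I * ν * x))) +
      ∫ x in Icc (0:ℝ) b, (g x + Complex.I * ν * y x) *
        (-(Complex.I * ν) * Complex.exp (-(Complex.I * ν * x))) := by
    have i1 : IntegrableOn (fun x => (h x + Complex.I * ν * g x) *
        Complex.exp (-(Complex.I * ν * x))) (Icc (0:ℝ) b) :=
      (hhb.add (hgb.const_mul _)).mul_continuousOn hEc.continuousOn isCompact_Icc
    have i2 : IntegrableOn (fun x => (g x + Complex.I * ν * y x) *
        (-(Complex.I * ν) * Complex.exp (-(Complex.I * ν * x)))) (Icc (0:ℝ) b) :=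
      (((hg.mono hsub).add (hycont.const_mul _)).mul
        (hEc.continuousOn.const_mul _)).integrableOn_Icc
    rw [← integral_add i1 i2]
    refine setIntegral_congr_ae measurableSet_Icc ?_
    have := (ae_restrict_iff' measurableSet_Icc).1 heq
    filter_upwards [this] with x hx hxb
    have h2 := hx (hsub hxb)
    push_cast at h2
    linear_combination (Complex.exp (-(Complex.I * ν * x))) * h2 +
      Complex.exp (-(Complex.I * ν * x)) * y x * ν ^ 2 * Complex.I_sq
  rw [hint, hparts]
  simp

section MeanValue

variable {q : ℝ → ℝ} {t ν M : ℝ} {y g h : ℝ → ℂ}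

lemma norm_exp_neg_I_mul (a b : ℝ) : ‖Complex.exp (-(Complex.I * a * b))‖ = 1 := by
  rw [Complex.norm_exp]; simp

lemma IsQPEigenpair.continuousOn (hyp : IsQPEigenpair q t ((ν ^ 2 : ℝ) : ℂ) y g h) :
    ContinuousOn y (Icc (0:ℝ) 1) := fun s hs => (hyp.2.1 s hs).continuousWithinAt

lemma norm_integral_potential_le (hq : IntegrableOn q (Icc (0:ℝ) 1)) {k : ℝ → ℂ}
    (hM : ∀ x ∈ Icc (0:ℝ) 1, ‖k x‖ ≤ M) {b : ℝ} (hb : b ∈ Icc (0:ℝ) 1) :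
    ‖∫ s in Icc (0:ℝ) b, (q s : ℂ) * k s‖ ≤ (∫ s in Icc (0:ℝ) 1, ‖q s‖) * M := by
  have hM0 : 0 ≤ M := (norm_nonneg _).trans (hM 0 (by simp))
  have hsub : Icc (0:ℝ) b ⊆ Icc 0 1 := Icc_subset_Icc_right hb.2
  calc ‖∫ s in Icc (0:ℝ) b, (q s : ℂ) * k s‖ ≤ ∫ s in Icc (0:ℝ) b, ‖q s‖ * M := by
        refine norm_integral_le_of_norm_le ((hq.mono_set hsub).norm.mul_const M) ?_
        filter_upwards [ae_restrict_mem measurableSet_Icc] with s hs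
        rw [norm_mul, Complex.norm_real]
        exact mul_le_mul_of_nonneg_left (hM s (hsub hs)) (norm_nonneg _)
    _ ≤ ∫ s in Icc (0:ℝ) 1, ‖q s‖ * M :=
        setIntegral_mono_set (hq.norm.mul_const M)
          (ae_of_all _ fun s => mul_nonneg (norm_nonneg _) hM0) hsub.eventuallyLE
    _ = _ := integral_mul_const _ _

lemma norm_amplitude_sub_le (hq : IntegrableOn q (Icc (0:ℝ) 1))
    (hyp : IsQPEigenpair q t ((ν ^ 2 : ℝ) : ℂ) y g h) (hM : ∀ x ∈ Icc (0:ℝ) 1, ‖y x‖ ≤ M)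
    {b : ℝ} (hb : b ∈ Icc (0:ℝ) 1) :
    ‖(g b + Complex.I * ν * y b) * Complex.exp (-(Complex.I * ν * b)) -
      (g 0 + Complex.I * ν * y 0)‖ ≤ (∫ s in Icc (0:ℝ) 1, ‖q s‖) * M := by
  rw [amplitude_eq hyp hb, add_sub_cancel_left]
  simp only [mul_assoc]
  refine norm_integral_potential_le hq (fun x hx => ?_) hb
  rw [norm_mul, ← mul_assoc, norm_exp_neg_I_mul, mul_one]
  exact hM x hx

lemma amplitude_mul_mean_le (hq : IntegrableOn q (Icc (0:ℝ) 1))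
    (hyp : IsQPEigenpair q t ((ν ^ 2 : ℝ) : ℂ) y g h) (hM : ∀ x ∈ Icc (0:ℝ) 1, ‖y x‖ ≤ M)
    (hzero : ∫ s in Icc (0:ℝ) 1, (q s : ℂ) * y s * Complex.exp (-(Complex.I * ν * s)) = 0) :
    ‖g 0 + Complex.I * ν * y 0‖ * ‖∫ s in Icc (0:ℝ) 1, (q s : ℂ)‖ ≤
      ‖g 0 - Complex.I * ν * y 0‖ *
        ‖∫ s in Icc (0:ℝ) 1, (q s : ℂ) * Complex.exp (-(Complex.I * (2 * ν : ℝ) * s))‖ +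
      2 * (∫ s in Icc (0:ℝ) 1, ‖q s‖) ^ 2 * M := by
  set Q := ∫ s in Icc (0:ℝ) 1, ‖q s‖ with hQ
  set A0 := g 0 + Complex.I * ν * y 0
  set B0 := g 0 - Complex.I * ν * y 0 with hB0
  have hyp' : IsQPEigenpair q t (((-ν) ^ 2 : ℝ) : ℂ) y g h := by rwa [neg_sq]
  set err : ℝ → ℂ := fun x =>
    ((g x + Complex.I * ν * y x) * Complex.exp (-(Complex.I * ν * x)) - A0) -
      ((g x - Complex.I * ν * y x) * Complex.exp (Complex.I * ν * x) - B0) *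
        Complex.exp (-(Complex.I * (2 * ν : ℝ) * x)) with herr
  have herr_le : ∀ x ∈ Icc (0:ℝ) 1, ‖err x‖ ≤ 2 * (Q * M) := by
    intro x hx
    have h1 := norm_amplitude_sub_le hq hyp hM hx
    have h2 := norm_amplitude_sub_le hq hyp' hM hx
    have h3 : ‖(g x - Complex.I * ν * y x) * Complex.exp (Complex.I * ν * x) - B0‖ ≤ Q * M := by
      convert h2 using 3
      · congr 1
        · push_cast; ring
        · push_cast; ring_nf
      · rw [hB0]; push_cast; ring
    calc ‖err x‖ ≤ _ := norm_sub_le _ _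
      _ ≤ Q * M + Q * M := by
        rw [norm_mul, norm_exp_neg_I_mul, mul_one]
        exact add_le_add h1 h3
      _ = _ := by ring
  have hqc : IntegrableOn (fun x => (q x : ℂ)) (Icc (0:ℝ) 1) := hq.ofReal
  have hyc := hyp.continuousOn
  have hid : ∀ x : ℝ, (q x : ℂ) * err x =
      2 * Complex.I * ν * ((q x : ℂ) * y x * Complex.exp (-(Complex.I * ν * x))) -
        (A0 * q x - B0 * ((q x : ℂ) * Complex.exp (-(Complex.I * (2 * ν : ℝ) * x)))) := by
    intro x
    have e1 : Complex.exp (Complex.I * ν * x) * Complex.exp (-(Complex.I * (2 * ν : ℝ) * x)) =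
        Complex.exp (-(Complex.I * ν * x)) := by
      rw [← Complex.exp_add]; congr 1; push_cast; ring
    simp only [herr]
    linear_combination -(q x : ℂ) * (g x - Complex.I * ν * y x) * e1
  have i1 : IntegrableOn (fun x => (q x : ℂ) * y x * Complex.exp (-(Complex.I * ν * x)))
      (Icc (0:ℝ) 1) :=
    integrableOn_mul_continuousOn_unit (integrableOn_mul_continuousOn_unit hqc hyc) (by fun_prop)
  have i2 : IntegrableOn (fun x => (q x : ℂ) * Complex.exp (-(Complex.I * (2 * ν : ℝ) * x)))
      (Icc (0:ℝ) 1) := integrableOn_mul_continuousOn_unit hqc (by fun_prop)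
  have hint : ∫ x in Icc (0:ℝ) 1, (q x : ℂ) * err x =
      -(A0 * (∫ x in Icc (0:ℝ) 1, (q x : ℂ)) -
        B0 * ∫ s in Icc (0:ℝ) 1, (q s : ℂ) * Complex.exp (-(Complex.I * (2 * ν : ℝ) * s))) := by
    simp only [hid]
    have i3 : IntegrableOn (fun x => A0 * (q x : ℂ) -
        B0 * ((q x : ℂ) * Complex.exp (-(Complex.I * (2 * ν : ℝ) * x)))) (Icc (0:ℝ) 1) :=
      (hqc.const_mul _).sub (i2.const_mul _)
    rw [integral_sub (i1.const_mul _) i3,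
      integral_sub (hqc.const_mul _) (i2.const_mul _), integral_const_mul, hzero,
      integral_const_mul, integral_const_mul]
    ring
  have hbound := norm_integral_potential_le hq herr_le (b := 1) (by simp)
  rw [hint, norm_neg, ← hQ] at hbound
  have := norm_le_insert' (A0 * (∫ x in Icc (0:ℝ) 1, (q x : ℂ)))
    (B0 * ∫ s in Icc (0:ℝ) 1, (q s : ℂ) * Complex.exp (-(Complex.I * (2 * ν : ℝ) * s)))
  rw [norm_mul, norm_mul] at this
  linarith

/-- An eigenvalue `ν²` with `e^{iν} = e^{it}` forces the mean of the potential to be small. -/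
lemma exists_norm_mean_le (hq : IntegrableOn q (Icc (0:ℝ) 1)) (t : ℝ) :
    ∃ C : ℝ, ∀ ν : ℝ, 0 < ν → 2 * (∫ s in Icc (0:ℝ) 1, ‖q s‖) ≤ ν →
      Complex.exp (Complex.I * t) = Complex.exp (Complex.I * ν) →
      IsQPEigenvalue q t ((ν ^ 2 : ℝ) : ℂ) →
      ‖∫ s in Icc (0:ℝ) 1, (q s : ℂ)‖ ≤
        ‖∫ s in Icc (0:ℝ) 1, (q s : ℂ) * Complex.exp (-(Complex.I * (2 * ν : ℝ) * s))‖ +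
        ‖∫ s in Icc (0:ℝ) 1, (q s : ℂ) * Complex.exp (-(Complex.I * (2 * -ν : ℝ) * s))‖ +
        C / ν := by
  set Q := ∫ s in Icc (0:ℝ) 1, ‖q s‖ with hQ
  set δ := ‖Complex.exp (Complex.I * t) * Complex.exp (Complex.I * t) - 1‖ with hδ
  refine ⟨4 * Q ^ 2 + Q ^ 2 / δ, fun ν hν hνQ hexp ⟨y, g, h, hyp⟩ => ?_⟩
  have hQ0 : 0 ≤ Q := integral_nonneg fun _ => norm_nonneg _
  have hyp' : IsQPEigenpair q t (((-ν) ^ 2 : ℝ) : ℂ) y g h := by rwa [neg_sq]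
  obtain ⟨x₀, hx₀, hmax⟩ := isCompact_Icc.exists_isMaxOn (nonempty_Icc.2 zero_le_one)
    hyp.continuousOn.norm
  set M := ‖y x₀‖ with hMdef
  have hM : ∀ x ∈ Icc (0:ℝ) 1, ‖y x‖ ≤ M := fun x hx => hmax hx
  have hMpos : 0 < M := by
    obtain ⟨x, hx, hne⟩ := hyp.1
    exact (norm_pos_iff.2 hne).trans_le (hM x hx)
  set A0 := g 0 + Complex.I * ν * y 0 with hA0
  set B0 := g 0 - Complex.I * ν * y 0 with hB0
  have hB0' : g 0 + Complex.I * (-ν : ℝ) * y 0 = B0 := by rw [hB0]; push_cast; ring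
  have hA0' : g 0 - Complex.I * (-ν : ℝ) * y 0 = A0 := by rw [hA0]; push_cast; ring
  have hN : 2 * ν * M ≤ ‖A0‖ + ‖B0‖ + 2 * (Q * M) := by
    have h1 := norm_amplitude_sub_le hq hyp hM hx₀
    have h2 := norm_amplitude_sub_le hq hyp' hM hx₀
    rw [hB0'] at h2
    have h3 := (norm_sub_norm_le _ _).trans h1
    have h4 := (norm_sub_norm_le _ _).trans h2
    rw [norm_mul, norm_exp_neg_I_mul, mul_one] at h3 h4
    have h5 : 2 * ν * M ≤ ‖g x₀ + Complex.I * ν * y x₀‖ +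
        ‖g x₀ + Complex.I * (-ν : ℝ) * y x₀‖ := by
      refine le_trans (le_of_eq ?_) (norm_sub_le _ _)
      have : g x₀ + Complex.I * ν * y x₀ - (g x₀ + Complex.I * (-ν : ℝ) * y x₀) =
        2 * Complex.I * ν * y x₀ := by push_cast; ring
      rw [this]
      simp [abs_of_pos hν, hMdef]
    linarith
  have hNM : ν * M ≤ ‖A0‖ + ‖B0‖ := by nlinarith
  have hNpos : 0 < ‖A0‖ + ‖B0‖ := (mul_pos hν hMpos).trans_le hNM
  have hMle : M ≤ (‖A0‖ + ‖B0‖) / ν := by rw [le_div_iff₀ hν]; linarith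
  have h01 : (1:ℝ) ∈ Icc (0:ℝ) 1 := by simp
  have hee : Complex.exp (Complex.I * t) * Complex.exp (-(Complex.I * ν)) = 1 := by
    rw [hexp, ← Complex.exp_add]; simp
  have hzero : ∫ s in Icc (0:ℝ) 1, (q s : ℂ) * y s * Complex.exp (-(Complex.I * ν * s)) = 0 := by
    have h1 := amplitude_eq hyp h01
    rw [hyp.2.2.2.2.2.2.1, hyp.2.2.2.2.2.2.2, Complex.ofReal_one, mul_one] at h1
    linear_combination -h1 + A0 * hee
  have hA := amplitude_mul_mean_le hq hyp hM hzero
  have hjump : ∫ s in Icc (0:ℝ) 1, (q s : ℂ) * y s * Complex.exp (-(Complex.I * (-ν : ℝ) * s)) =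
      (Complex.exp (Complex.I * t) * Complex.exp (Complex.I * t) - 1) * B0 := by
    have h1 := amplitude_eq hyp' h01
    have h2 : Complex.exp (-(Complex.I * (-ν : ℝ) * (1:ℝ))) = Complex.exp (Complex.I * t) := by
      rw [hexp]; congr 1; push_cast; ring
    rw [h2, hyp.2.2.2.2.2.2.1, hyp.2.2.2.2.2.2.2, hB0'] at h1
    rw [← hB0'] at h1 ⊢
    linear_combination -h1
  set ε₁ := ‖∫ s in Icc (0:ℝ) 1, (q s : ℂ) * Complex.exp (-(Complex.I * (2 * ν : ℝ) * s))‖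
  set ε₂ := ‖∫ s in Icc (0:ℝ) 1, (q s : ℂ) * Complex.exp (-(Complex.I * (2 * -ν : ℝ) * s))‖
  set I := ‖∫ s in Icc (0:ℝ) 1, (q s : ℂ)‖
  have hε₁ : 0 ≤ ε₁ := norm_nonneg _
  have hε₂ : 0 ≤ ε₂ := norm_nonneg _
  have hIQ : I ≤ Q := by
    refine (norm_integral_le_integral_norm _).trans (le_of_eq ?_)
    simp [hQ]
  have hBI : ‖B0‖ * I ≤ ‖A0‖ * ε₂ + (2 * Q ^ 2 + Q ^ 2 / δ) * M := by
    by_cases h1 : δ = 0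
    · have h2 := norm_eq_zero.1 h1
      rw [h2, zero_mul] at hjump
      have h3 := amplitude_mul_mean_le hq hyp' hM hjump
      rw [hB0', hA0'] at h3
      rw [h1, div_zero, add_zero]
      exact h3
    · have hδ0 : 0 < δ := lt_of_le_of_ne (norm_nonneg _) (Ne.symm h1)
      have h2 : δ * ‖B0‖ ≤ Q * M := by
        rw [hδ, ← norm_mul, ← hjump]
        simp only [mul_assoc]
        refine norm_integral_potential_le hq (fun x hx => ?_) h01
        rw [norm_mul, ← mul_assoc, norm_exp_neg_I_mul, mul_one]
        exact hM x hx
      have h3 : ‖B0‖ ≤ Q * M / δ := by rw [le_div_iff₀ hδ0]; linarith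
      have h4 : ‖B0‖ * I ≤ Q * M / δ * Q :=
        mul_le_mul h3 hIQ (norm_nonneg _) (by positivity)
      have h5 : Q * M / δ * Q = Q ^ 2 / δ * M := by ring
      have h6 : 0 ≤ ‖A0‖ * ε₂ + 2 * Q ^ 2 * M := by positivity
      linarith
  have hC : 0 ≤ 4 * Q ^ 2 + Q ^ 2 / δ := by positivity
  have hsum : (‖A0‖ + ‖B0‖) * I ≤
      (‖A0‖ + ‖B0‖) * (ε₁ + ε₂ + (4 * Q ^ 2 + Q ^ 2 / δ) / ν) := by
    have h1 := mul_le_mul_of_nonneg_left hMle hC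
    have h2 : (4 * Q ^ 2 + Q ^ 2 / δ) * ((‖A0‖ + ‖B0‖) / ν) =
      (‖A0‖ + ‖B0‖) * ((4 * Q ^ 2 + Q ^ 2 / δ) / ν) := by ring
    have h3 : 0 ≤ ‖A0‖ * ε₁ := by positivity
    have h4 : 0 ≤ ‖B0‖ * ε₂ := by positivity
    linarith
  exact le_of_mul_le_mul_left hsum hNpos

lemma integral_potential_eq_zero (hq : IntegrableOn q (Icc (0:ℝ) 1))
    (hspec : ∀ n : ℕ, 1 ≤ n → IsQPEigenvalue q t (((2 * n * Real.pi + t) ^ 2 : ℝ) : ℂ)) :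
    ∫ s in Icc (0:ℝ) 1, q s = 0 := by
  obtain ⟨C, hC⟩ := exists_norm_mean_le hq t
  set ν : ℕ → ℝ := fun n => 2 * n * Real.pi + t with hν
  have hνtop : Tendsto ν atTop atTop := by
    refine tendsto_atTop_add_const_right _ _ ?_
    exact (tendsto_natCast_atTop_atTop.const_mul_atTop two_pos).atTop_mul_const Real.pi_pos
  have h2ν : Tendsto (fun n => 2 * ν n) atTop (cocompact ℝ) :=
    (hνtop.const_mul_atTop two_pos).mono_right atTop_le_cocompact
  have h2ν' : Tendsto (fun n => 2 * -ν n) atTop (cocompact ℝ) := by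
    have : Tendsto (fun n => 2 * -ν n) atTop atBot := by
      have := tendsto_neg_atTop_atBot.comp (hνtop.const_mul_atTop two_pos)
      refine this.congr fun n => ?_
      simp
    exact this.mono_right atBot_le_cocompact
  have hlim := (((tendsto_fourier_unit (q := q)).comp h2ν).norm.add
    ((tendsto_fourier_unit (q := q)).comp h2ν').norm).add (hνtop.const_div_atTop C)
  simp only [norm_zero, add_zero] at hlim
  have hle : ‖∫ s in Icc (0:ℝ) 1, (q s : ℂ)‖ ≤ 0 := by
    refine ge_of_tendsto hlim ?_
    filter_upwards [eventually_ge_atTop 1, hνtop.eventually_gt_atTop 0,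
      hνtop.eventually_ge_atTop (2 * (∫ s in Icc (0:ℝ) 1, ‖q s‖))] with n hn h0 h1
    refine hC (ν n) h0 h1 ?_ (hspec n hn)
    rw [Complex.exp_eq_exp_iff_exists_int]
    refine ⟨-n, ?_⟩
    simp only [hν]
    push_cast
    ring
  have := norm_le_zero_iff.1 hle
  rw [integral_complex_ofReal] at this
  exact_mod_cast this

end MeanValue

/-- Bounded sequences in a separable Hilbert space have weakly convergent subsequences. -/
lemma exists_subseq_tendsto_inner {H : Type*} [NormedAddCommGroup H] [InnerProductSpace ℂ H]
    [CompleteSpace H] [TopologicalSpace.SeparableSpace H] {v : ℕ → H} {R : ℝ}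
    (hv : ∀ n, ‖v n‖ ≤ R) :
    ∃ (w : H) (φ : ℕ → ℕ), StrictMono φ ∧
      ∀ z, Tendsto (fun n => inner ℂ z (v (φ n))) atTop (𝓝 (inner ℂ z w)) := by
  have hmem : ∀ n, (StrongDual.toWeakDual (InnerProductSpace.toDual ℂ H (v n) : StrongDual ℂ H) :
      WeakDual ℂ H) ∈
      WeakDual.toStrongDual (𝕜 := ℂ) (E := H) ⁻¹' Metric.closedBall (0 : StrongDual ℂ H) R := by
    intro n
    rw [mem_preimage, mem_closedBall_zero_iff]
    exact ((InnerProductSpace.toDual ℂ H).norm_map (v n)).trans_le (hv n)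
  obtain ⟨ℓ, -, φ, hφ, hlim⟩ := WeakDual.isSeqCompact_closedBall ℂ H 0 R hmem
  refine ⟨(InnerProductSpace.toDual ℂ H).symm (WeakDual.toStrongDual ℓ), φ, hφ, fun z => ?_⟩
  have h1 := ((WeakDual.eval_continuous (𝕜 := ℂ) z).tendsto ℓ).comp hlim
  have h2 := (Complex.continuous_conj.tendsto _).comp h1
  rw [← inner_conj_symm z, InnerProductSpace.toDual_symm_apply]
  refine h2.congr fun n => ?_
  rw [← inner_conj_symm z]
  rfl

lemma intervalIntegral_eq_setIntegral_unit (f : ℝ → ℂ) {x : ℝ} (hx : x ∈ Icc (0:ℝ) 1) :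
    ∫ s in (0:ℝ)..x, f s = ∫ s in Ioc 0 x, f s ∂(volume.restrict (Icc (0:ℝ) 1)) := by
  rw [intervalIntegral.integral_of_le hx.1, Measure.restrict_restrict measurableSet_Ioc,
    inter_eq_left.2 (Ioc_subset_Icc_self.trans (Icc_subset_Icc_right hx.2))]

lemma norm_toLp_sq {f : ℝ → ℂ} {μ : Measure ℝ} (hf : MemLp f 2 μ) :
    ‖hf.toLp f‖ ^ 2 = ∫ x, ‖f x‖ ^ 2 ∂μ := by
  rw [← RCLike.ofReal_inj (K := ℂ), RCLike.ofReal_pow, ← inner_self_eq_norm_sq_to_K, L2.inner_def]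
  rw [← integral_ofReal]
  refine integral_congr_ae ?_
  filter_upwards [hf.coeFn_toLp] with x hx
  rw [hx, inner_self_eq_norm_sq_to_K]
  norm_cast

/-- Weak sequential compactness in `L²[0,1]`, expressed through primitives and energies. -/
lemma exists_subseq_tendsto_primitive {f : ℕ → ℝ → ℂ}
    (hf : ∀ n, MemLp (f n) 2 (volume.restrict (Icc (0:ℝ) 1))) {R : ℝ}
    (hR : ∀ n, ∫ x in Icc (0:ℝ) 1, ‖f n x‖ ^ 2 ≤ R) :
    ∃ (F : ℝ → ℂ) (φ : ℕ → ℕ), MemLp F 2 (volume.restrict (Icc (0:ℝ) 1)) ∧ StrictMono φ ∧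
      (∀ x ∈ Icc (0:ℝ) 1, Tendsto (fun n => ∫ s in (0:ℝ)..x, f (φ n) s) atTop
        (𝓝 (∫ s in (0:ℝ)..x, F s))) ∧
      ∀ (ψ : ℕ → ℕ) (c : ℝ), StrictMono ψ →
        Tendsto (fun n => ∫ x in Icc (0:ℝ) 1, ‖f (φ (ψ n)) x‖ ^ 2) atTop (𝓝 c) →
        ∫ x in Icc (0:ℝ) 1, ‖F x‖ ^ 2 ≤ c := by
  set v : ℕ → Lp ℂ 2 (volume.restrict (Icc (0:ℝ) 1)) := fun n => (hf n).toLp (f n) with hv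
  have : Fact ((2 : ENNReal) ≠ ⊤) := ⟨by simp⟩
  obtain ⟨w, φ, hφ, hlim⟩ := exists_subseq_tendsto_inner (v := v) (R := Real.sqrt R) fun n => by
    apply Real.le_sqrt_of_sq_le
    rw [norm_toLp_sq]
    exact hR n
  have hw : MemLp (w : ℝ → ℂ) 2 (volume.restrict (Icc (0:ℝ) 1)) := Lp.memLp w
  refine ⟨w, φ, hw, hφ, fun x hx => ?_, fun ψ c hψ hc => ?_⟩
  · have h1 := hlim (indicatorConstLp 2 (measurableSet_Ioc (a := 0) (b := x))
      (measure_ne_top _ _) 1)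
    simp only [L2.inner_indicatorConstLp_one] at h1
    rw [intervalIntegral_eq_setIntegral_unit _ hx]
    refine h1.congr fun n => ?_
    rw [intervalIntegral_eq_setIntegral_unit _ hx]
    exact integral_congr_ae (ae_restrict_of_ae (hf (φ n)).coeFn_toLp)
  · have hww : ∫ x in Icc (0:ℝ) 1, ‖w x‖ ^ 2 = ‖w‖ ^ 2 := by
      rw [← norm_toLp_sq hw, Lp.toLp_coeFn]
    have h1 : Tendsto (fun n => ‖inner ℂ w (v (φ (ψ n)))‖ ^ 2) atTop (𝓝 (‖inner ℂ w w‖ ^ 2)) :=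
      (((hlim w).comp hψ.tendsto_atTop).norm).pow 2
    have h2 : Tendsto (fun n => ‖w‖ ^ 2 * ∫ x in Icc (0:ℝ) 1, ‖f (φ (ψ n)) x‖ ^ 2) atTop
        (𝓝 (‖w‖ ^ 2 * c)) := hc.const_mul _
    have h3 := le_of_tendsto_of_tendsto' h1 h2 fun n => by
      rw [← norm_toLp_sq (hf _), ← mul_pow]
      exact pow_le_pow_left₀ (norm_nonneg _) (norm_inner_le_norm _ _) 2
    have h4 : ‖inner ℂ w w‖ = ‖w‖ ^ 2 := by
      rw [inner_self_eq_norm_sq_to_K]; simp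
    rw [h4] at h3
    rw [hww]
    rcases eq_or_lt_of_le (sq_nonneg ‖w‖) with h0 | h0
    · rw [← h0]
      exact ge_of_tendsto' hc fun n => integral_nonneg fun _ => sq_nonneg _
    · rw [sq (‖w‖ ^ 2)] at h3
      exact le_of_mul_le_mul_left h3 h0

/-- The primitive of `f` with value `a` at `0`. -/
noncomputable def qpPrimitive (a : ℂ) (f : ℝ → ℂ) (x : ℝ) : ℂ := a + ∫ s in (0:ℝ)..x, f s

/-- The function `qpPrimitive a f` is in the form domain of the quasi-periodic problem. -/
structure QPAdmissible (t : ℝ) (a : ℂ) (f : ℝ → ℂ) : Prop where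
  memLp : MemLp f 2 (volume.restrict (Icc (0:ℝ) 1))
  boundary : qpPrimitive a f 1 = Complex.exp (Complex.I * t) * a

/-- The quadratic form `∫ |y'|² + p |y|²` at `y = qpPrimitive a f`. -/
noncomputable def qpForm (p : ℝ → ℝ) (a : ℂ) (f : ℝ → ℂ) : ℝ :=
  (∫ x in Icc (0:ℝ) 1, ‖f x‖ ^ 2) + ∫ x in Icc (0:ℝ) 1, p x * ‖qpPrimitive a f x‖ ^ 2

section Variation

variable {t : ℝ} {a b : ℂ} {f g : ℝ → ℂ} {p : ℝ → ℝ}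

lemma MeasureTheory.MemLp.integrableOn_unit
    (hf : MemLp f 2 (volume.restrict (Icc (0:ℝ) 1))) : IntegrableOn f (Icc (0:ℝ) 1) :=
  hf.integrable one_le_two

lemma MeasureTheory.MemLp.integrable_norm_sq_unit
    (hf : MemLp f 2 (volume.restrict (Icc (0:ℝ) 1))) :
    IntegrableOn (fun x => ‖f x‖ ^ 2) (Icc (0:ℝ) 1) :=
  (memLp_two_iff_integrable_sq_norm hf.1).1 hf

lemma continuousOn_qpPrimitive (hf : IntegrableOn f (Icc (0:ℝ) 1)) (a : ℂ) :
    ContinuousOn (qpPrimitive a f) (Icc (0:ℝ) 1) := continuousOn_primitive_unit hf a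

lemma qpPrimitive_zero (a : ℂ) (f : ℝ → ℂ) : qpPrimitive a f 0 = a := by simp [qpPrimitive]

lemma qpPrimitive_add_mul (hf : IntegrableOn f (Icc (0:ℝ) 1)) (hg : IntegrableOn g (Icc (0:ℝ) 1))
    (a b c : ℂ) {x : ℝ} (hx : x ∈ Icc (0:ℝ) 1) :
    qpPrimitive (a + c * b) (fun x => f x + c * g x) x =
      qpPrimitive a f x + c * qpPrimitive b g x := by
  unfold qpPrimitive
  rw [intervalIntegral.integral_add (intervalIntegrable_of_mem_unit hf hx)
    ((intervalIntegrable_of_mem_unit hg hx).const_mul _), intervalIntegral.integral_const_mul]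
  ring

lemma QPAdmissible.add_mul (hf : QPAdmissible t a f) (hg : QPAdmissible t b g) (c : ℂ) :
    QPAdmissible t (a + c * b) (fun x => f x + c * g x) where
  memLp := hf.memLp.add (hg.memLp.const_mul c)
  boundary := by
    rw [qpPrimitive_add_mul hf.memLp.integrableOn_unit hg.memLp.integrableOn_unit _ _ _ (by simp),
      hf.boundary, hg.boundary]
    ring

lemma QPAdmissible.continuousOn (hf : QPAdmissible t a f) :
    ContinuousOn (qpPrimitive a f) (Icc (0:ℝ) 1) :=
  continuousOn_qpPrimitive hf.memLp.integrableOn_unit a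

lemma norm_add_real_mul_sq (u v : ℂ) (ε : ℝ) :
    ‖u + ε * v‖ ^ 2 = ‖u‖ ^ 2 + 2 * ε * (u * (starRingEnd ℂ) v).re + ε ^ 2 * ‖v‖ ^ 2 := by
  simp only [Complex.sq_norm, Complex.normSq_apply, Complex.add_re, Complex.add_im,
    Complex.mul_re, Complex.mul_im, Complex.ofReal_re, Complex.ofReal_im, Complex.conj_re,
    Complex.conj_im]
  ring

lemma integrable_mul_norm_sq_unit (hp : IntegrableOn p (Icc (0:ℝ) 1)) {y : ℝ → ℂ}
    (hy : ContinuousOn y (Icc (0:ℝ) 1)) : IntegrableOn (fun x => p x * ‖y x‖ ^ 2) (Icc (0:ℝ) 1) :=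
  hp.mul_continuousOn (hy.norm.pow 2) isCompact_Icc

lemma MeasureTheory.MemLp.integrable_mul_conj_unit
    (hf : MemLp f 2 (volume.restrict (Icc (0:ℝ) 1)))
    (hg : MemLp g 2 (volume.restrict (Icc (0:ℝ) 1))) :
    IntegrableOn (fun x => f x * (starRingEnd ℂ) (g x)) (Icc (0:ℝ) 1) :=
  hf.integrable_mul hg.star

lemma integrable_mul_conj_primitive (hp : IntegrableOn p (Icc (0:ℝ) 1)) {y z : ℝ → ℂ}
    (hy : ContinuousOn y (Icc (0:ℝ) 1)) (hz : ContinuousOn z (Icc (0:ℝ) 1)) :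
    IntegrableOn (fun x => (p x : ℂ) * y x * (starRingEnd ℂ) (z x)) (Icc (0:ℝ) 1) :=
  integrableOn_mul_continuousOn_unit (integrableOn_mul_continuousOn_unit hp.ofReal hy)
    (Complex.continuous_conj.comp_continuousOn hz)

lemma qpForm_add_mul (hp : IntegrableOn p (Icc (0:ℝ) 1)) (hf : QPAdmissible t a f)
    (hg : QPAdmissible t b g) (ε : ℝ) :
    qpForm p (a + ε * b) (fun x => f x + ε * g x) = qpForm p a f + 2 * ε *
      ((∫ x in Icc (0:ℝ) 1, f x * (starRingEnd ℂ) (g x)) +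
        ∫ x in Icc (0:ℝ) 1, (p x : ℂ) * qpPrimitive a f x *
          (starRingEnd ℂ) (qpPrimitive b g x)).re + ε ^ 2 * qpForm p b g := by
  unfold qpForm
  have i1 := hf.memLp.integrable_norm_sq_unit
  have i2 := hg.memLp.integrable_norm_sq_unit
  have i3 := hf.memLp.integrable_mul_conj_unit hg.memLp
  have j1 := integrable_mul_norm_sq_unit hp hf.continuousOn
  have j2 := integrable_mul_norm_sq_unit hp hg.continuousOn
  have j3 := integrable_mul_conj_primitive hp hf.continuousOn hg.continuousOn
  have e1 : ∫ x in Icc (0:ℝ) 1, ‖f x + ε * g x‖ ^ 2 = (∫ x in Icc (0:ℝ) 1, ‖f x‖ ^ 2) +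
      2 * ε * (∫ x in Icc (0:ℝ) 1, f x * (starRingEnd ℂ) (g x)).re +
      ε ^ 2 * ∫ x in Icc (0:ℝ) 1, ‖g x‖ ^ 2 := by
    have h1 := integral_re i3
    simp only [RCLike.re_to_complex] at h1
    have i4 : IntegrableOn (fun x => 2 * ε * (f x * (starRingEnd ℂ) (g x)).re) (Icc (0:ℝ) 1) :=
      i3.re.const_mul _
    have i5 : IntegrableOn (fun x => ‖f x‖ ^ 2 + 2 * ε * (f x * (starRingEnd ℂ) (g x)).re)
      (Icc (0:ℝ) 1) := i1.add i4
    rw [← h1, ← integral_const_mul, ← integral_const_mul, ← integral_add i1 i4,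
      ← integral_add i5 (i2.const_mul _)]
    simp only [norm_add_real_mul_sq]
  have e2 : ∫ x in Icc (0:ℝ) 1, p x * ‖qpPrimitive (a + ε * b) (fun x => f x + ε * g x) x‖ ^ 2 =
      (∫ x in Icc (0:ℝ) 1, p x * ‖qpPrimitive a f x‖ ^ 2) +
      2 * ε * (∫ x in Icc (0:ℝ) 1, (p x : ℂ) * qpPrimitive a f x *
          (starRingEnd ℂ) (qpPrimitive b g x)).re +
      ε ^ 2 * ∫ x in Icc (0:ℝ) 1, p x * ‖qpPrimitive b g x‖ ^ 2 := by
    have h1 := integral_re j3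
    simp only [RCLike.re_to_complex] at h1
    have j4 : IntegrableOn (fun x => 2 * ε * ((p x : ℂ) * qpPrimitive a f x *
        (starRingEnd ℂ) (qpPrimitive b g x)).re) (Icc (0:ℝ) 1) := j3.re.const_mul _
    have j5 : IntegrableOn (fun x => p x * ‖qpPrimitive a f x‖ ^ 2 + 2 * ε * ((p x : ℂ) *
        qpPrimitive a f x * (starRingEnd ℂ) (qpPrimitive b g x)).re) (Icc (0:ℝ) 1) := j1.add j4
    rw [← h1, ← integral_const_mul, ← integral_const_mul, ← integral_add j1 j4,
      ← integral_add j5 (j2.const_mul _)]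
    refine setIntegral_congr_fun measurableSet_Icc fun x hx => ?_
    rw [qpPrimitive_add_mul hf.memLp.integrableOn_unit hg.memLp.integrableOn_unit _ _ _ hx,
      norm_add_real_mul_sq, mul_assoc (p x : ℂ), Complex.re_ofReal_mul]
    ring
  rw [e1, e2, Complex.add_re]
  ring

lemma eq_zero_of_forall_quadratic_nonneg {B F : ℝ} (hF : 0 ≤ F)
    (h : ∀ ε : ℝ, 0 ≤ 2 * ε * B + ε ^ 2 * F) : B = 0 := by
  have h1 := h (-B / (F + 1))
  have hF1 : 0 < F + 1 := by linarith
  have h2 : 2 * (-B / (F + 1)) * B + (-B / (F + 1)) ^ 2 * F =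
      -(B ^ 2 * ((F + 2) / (F + 1) ^ 2)) := by
    field_simp; ring
  rw [h2] at h1
  have h3 : 0 < (F + 2) / (F + 1) ^ 2 := by positivity
  by_contra hB
  have : 0 < B ^ 2 := by positivity
  have := mul_pos this h3
  linarith

lemma conj_qpPrimitive (b : ℂ) (g : ℝ → ℂ) {x : ℝ} (hx : x ∈ Icc (0:ℝ) 1) :
    (starRingEnd ℂ) (qpPrimitive b g x) =
      qpPrimitive ((starRingEnd ℂ) b) (fun s => (starRingEnd ℂ) (g s)) x := by
  unfold qpPrimitive
  rw [map_add, intervalIntegral.integral_of_le hx.1, intervalIntegral.integral_of_le hx.1,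
    integral_conj]

/-- First variation of the quadratic form at a null vector of a nonnegative form. -/
lemma first_variation (hp : IntegrableOn p (Icc (0:ℝ) 1))
    (hmin : ∀ (b : ℂ) (g : ℝ → ℂ), QPAdmissible t b g → 0 ≤ qpForm p b g)
    (hf : QPAdmissible t a f) (hzero : qpForm p a f = 0) (hg : QPAdmissible t b g) :
    ((∫ x in Icc (0:ℝ) 1, (f x - qpPrimitive 0 (fun s => p s * qpPrimitive a f s) x) *
        (starRingEnd ℂ) (g x)) +
      qpPrimitive 0 (fun s => p s * qpPrimitive a f s) 1 *
        (starRingEnd ℂ) (qpPrimitive b g 1)).re = 0 := by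
  have h1 : ((∫ x in Icc (0:ℝ) 1, f x * (starRingEnd ℂ) (g x)) +
        ∫ x in Icc (0:ℝ) 1, (p x : ℂ) * qpPrimitive a f x *
          (starRingEnd ℂ) (qpPrimitive b g x)).re = 0 := by
    refine eq_zero_of_forall_quadratic_nonneg (hmin b g hg) fun ε => ?_
    have h2 := hmin _ _ (hf.add_mul hg ε)
    rw [qpForm_add_mul hp hf hg, hzero, zero_add] at h2
    exact h2
  refine Eq.trans (congrArg Complex.re ?_) h1
  have hpy : IntegrableOn (fun s => (p s : ℂ) * qpPrimitive a f s) (Icc (0:ℝ) 1) :=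
    integrableOn_mul_continuousOn_unit hp.ofReal hf.continuousOn
  have hgc : IntegrableOn (fun s => (starRingEnd ℂ) (g s)) (Icc (0:ℝ) 1) :=
    MeasureTheory.MemLp.integrableOn_unit hg.memLp.star
  have h3 := integral_parts_of_primitive (b := 1) zero_le_one
    (F := qpPrimitive 0 (fun s => p s * qpPrimitive a f s))
    (G := qpPrimitive ((starRingEnd ℂ) b) (fun s => (starRingEnd ℂ) (g s))) hpy hgc
    (fun x _ => by rw [qpPrimitive_zero]; rfl) (fun x _ => by rw [qpPrimitive_zero]; rfl)
  rw [qpPrimitive_zero, zero_mul, sub_zero, ← conj_qpPrimitive b g (by simp)] at h3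
  have h4 : ∫ x in Icc (0:ℝ) 1, (p x : ℂ) * qpPrimitive a f x *
      (starRingEnd ℂ) (qpPrimitive b g x) =
      ∫ x in Icc (0:ℝ) 1, (p x : ℂ) * qpPrimitive a f x *
        qpPrimitive ((starRingEnd ℂ) b) (fun s => (starRingEnd ℂ) (g s)) x :=
    setIntegral_congr_fun measurableSet_Icc fun x hx => by
      simp only [conj_qpPrimitive b g hx]
  have i1 := hf.memLp.integrable_mul_conj_unit hg.memLp
  have i2 : IntegrableOn (fun x => qpPrimitive 0 (fun s => p s * qpPrimitive a f s) x *
      (starRingEnd ℂ) (g x)) (Icc (0:ℝ) 1) :=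
    hgc.continuousOn_mul (continuousOn_qpPrimitive hpy 0) isCompact_Icc
  simp only [sub_mul]
  rw [integral_sub i1 i2, h4, ← h3]
  ring

/-- Euler–Lagrange equation for null vectors of a nonnegative quasi-periodic form. -/
lemma euler_lagrange (hp : IntegrableOn p (Icc (0:ℝ) 1))
    (hmin : ∀ (b : ℂ) (g : ℝ → ℂ), QPAdmissible t b g → 0 ≤ qpForm p b g)
    (hf : QPAdmissible t a f) (hzero : qpForm p a f = 0) :
    ∃ c : ℂ, (∀ᵐ x ∂(volume.restrict (Icc (0:ℝ) 1)),
        f x = qpPrimitive c (fun s => p s * qpPrimitive a f s) x) ∧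
      qpPrimitive c (fun s => p s * qpPrimitive a f s) 1 = Complex.exp (Complex.I * t) * c := by
  have hpy : IntegrableOn (fun s => (p s : ℂ) * qpPrimitive a f s) (Icc (0:ℝ) 1) :=
    integrableOn_mul_continuousOn_unit hp.ofReal hf.continuousOn
  set P := qpPrimitive 0 (fun s => p s * qpPrimitive a f s) with hP
  have hPc : ContinuousOn P (Icc (0:ℝ) 1) := continuousOn_qpPrimitive hpy 0
  have hshift : ∀ c x, qpPrimitive c (fun s => p s * qpPrimitive a f s) x = c + P x := by
    intro c x; simp [hP, qpPrimitive]
  have hPmem : MemLp P 2 (volume.restrict (Icc (0:ℝ) 1)) := by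
    rw [memLp_two_iff_integrable_sq_norm (hPc.aestronglyMeasurable measurableSet_Icc)]
    exact (hPc.norm.pow 2).integrableOn_Icc
  have hr : MemLp (fun x => f x - P x) 2 (volume.restrict (Icc (0:ℝ) 1)) := hf.memLp.sub hPmem
  set c := ∫ x in Icc (0:ℝ) 1, (f x - P x) with hc
  have hrc : MemLp (fun x => f x - P x - c) 2 (volume.restrict (Icc (0:ℝ) 1)) :=
    hr.sub (memLp_const c)
  have hmean : ∫ x in Icc (0:ℝ) 1, (f x - P x - c) = 0 := by
    rw [integral_sub hr.integrableOn_unit (integrable_const c)]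
    simp [hc]
  have hprim1 : qpPrimitive 0 (fun x => f x - P x - c) 1 = 0 := by
    unfold qpPrimitive
    rw [intervalIntegral_unit_eq, hmean, add_zero]
  have hae : ∀ᵐ x ∂(volume.restrict (Icc (0:ℝ) 1)), f x = c + P x := by
    have h1 := first_variation hp hmin hf hzero
      (b := 0) (g := fun x => f x - P x - c) ⟨hrc, by rw [hprim1]; simp⟩
    rw [hprim1, map_zero, mul_zero, add_zero, ← hP] at h1
    have h2 : (∫ x in Icc (0:ℝ) 1, (f x - P x) * (starRingEnd ℂ) (f x - P x - c)) =
        ((∫ x in Icc (0:ℝ) 1, ‖f x - P x - c‖ ^ 2 : ℝ) : ℂ) := by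
      have i1 := hrc.integrable_mul_conj_unit hrc
      have i2 : IntegrableOn (fun x => c * (starRingEnd ℂ) (f x - P x - c)) (Icc (0:ℝ) 1) :=
        (MeasureTheory.MemLp.integrableOn_unit hrc.star).const_mul c
      calc (∫ x in Icc (0:ℝ) 1, (f x - P x) * (starRingEnd ℂ) (f x - P x - c)) =
          ∫ x in Icc (0:ℝ) 1, ((f x - P x - c) * (starRingEnd ℂ) (f x - P x - c) +
            c * (starRingEnd ℂ) (f x - P x - c)) := by
            congr 1 with x; ring
        _ = (∫ x in Icc (0:ℝ) 1, (f x - P x - c) * (starRingEnd ℂ) (f x - P x - c)) := by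
            rw [integral_add i1 i2, integral_const_mul, integral_conj, hmean]; simp
        _ = _ := by
            rw [← integral_complex_ofReal]
            congr 1 with x
            rw [Complex.mul_conj, Complex.normSq_eq_norm_sq]
    rw [h2, Complex.ofReal_re,
      integral_eq_zero_iff_of_nonneg (fun _ => sq_nonneg _) hrc.integrable_norm_sq_unit] at h1
    filter_upwards [h1] with x hx
    simp only [Pi.zero_apply, ne_eq, OfNat.ofNat_ne_zero, not_false_eq_true, pow_eq_zero_iff,
      norm_eq_zero] at hx
    linear_combination hx
  refine ⟨c, by simpa only [hshift] using hae, ?_⟩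
  rw [hshift]
  set e := Complex.exp (Complex.I * t) with he
  have hee : e * (starRingEnd ℂ) e = 1 := by
    rw [Complex.mul_conj, Complex.normSq_eq_norm_sq, he, Complex.norm_exp]; simp
  set k := c * ((starRingEnd ℂ) e - 1) + P 1 * (starRingEnd ℂ) e with hk
  have hkadm : QPAdmissible t k (fun _ => k * (e - 1)) :=
    ⟨memLp_const _, by simp only [qpPrimitive, intervalIntegral.integral_const]; simp; ring⟩
  have h1 := first_variation hp hmin hf hzero hkadm
  rw [← hP, hkadm.boundary, ← he] at h1
  have h2 : (∫ x in Icc (0:ℝ) 1, (f x - P x) * (starRingEnd ℂ) (k * (e - 1))) =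
      c * (starRingEnd ℂ) (k * (e - 1)) := by
    rw [integral_mul_const]
  rw [h2] at h1
  have h3 : c * (starRingEnd ℂ) (k * (e - 1)) + P 1 * (starRingEnd ℂ) (e * k) =
      k * (starRingEnd ℂ) k := by
    simp only [map_mul, map_sub, map_one]
    rw [hk]; ring
  rw [h3, Complex.mul_conj, Complex.ofReal_re, Complex.normSq_eq_zero] at h1
  rw [hk] at h1
  linear_combination e * h1 - (c + P 1) * hee

end Variation

section Minimizer

variable {t : ℝ} {a : ℂ} {f : ℝ → ℂ} {q : ℝ → ℝ}

lemma sq_integral_norm_le (hf : MemLp f 2 (volume.restrict (Icc (0:ℝ) 1))) :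
    (∫ x in Icc (0:ℝ) 1, ‖f x‖) ^ 2 ≤ ∫ x in Icc (0:ℝ) 1, ‖f x‖ ^ 2 := by
  set S := ∫ x in Icc (0:ℝ) 1, ‖f x‖ with hS
  have i1 := hf.integrable_norm_sq_unit
  have i2 : IntegrableOn (fun x => 2 * S * ‖f x‖ - S ^ 2) (Icc (0:ℝ) 1) :=
    (hf.integrableOn_unit.norm.const_mul _).sub (integrable_const _)
  have h1 : ∫ x in Icc (0:ℝ) 1, (2 * S * ‖f x‖ - S ^ 2) ≤ ∫ x in Icc (0:ℝ) 1, ‖f x‖ ^ 2 :=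
    integral_mono i2 i1 fun x => by
      have := sq_nonneg (‖f x‖ - S)
      beta_reduce
      linarith
  rw [integral_sub (hf.integrableOn_unit.norm.const_mul _) (integrable_const _),
    integral_const_mul, ← hS] at h1
  simp at h1
  linarith

/-- One-dimensional Sobolev bound on the unit interval. -/
lemma norm_qpPrimitive_sq_le (hf : MemLp f 2 (volume.restrict (Icc (0:ℝ) 1))) (a : ℂ) {x : ℝ}
    (hx : x ∈ Icc (0:ℝ) 1) :
    ‖qpPrimitive a f x‖ ^ 2 ≤ 2 * (∫ z in Icc (0:ℝ) 1, ‖qpPrimitive a f z‖ ^ 2) +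
      2 * ∫ z in Icc (0:ℝ) 1, ‖f z‖ ^ 2 := by
  have hS := sq_integral_norm_le hf
  set S := ∫ x in Icc (0:ℝ) 1, ‖f x‖
  set N := ∫ x in Icc (0:ℝ) 1, ‖f x‖ ^ 2
  have hfi := hf.integrableOn_unit
  have hS0 : 0 ≤ S := integral_nonneg fun _ => norm_nonneg _
  have hdiff : ∀ z ∈ Icc (0:ℝ) 1, ‖qpPrimitive a f x - qpPrimitive a f z‖ ≤ S := by
    intro z hz
    have h1 : qpPrimitive a f x - qpPrimitive a f z = ∫ s in z..x, f s := by
      rw [← intervalIntegral.integral_interval_sub_left (intervalIntegrable_of_mem_unit hfi hx)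
        (intervalIntegrable_of_mem_unit hfi hz)]
      simp [qpPrimitive]
    rw [h1]
    refine (intervalIntegral.norm_integral_le_integral_norm_uIoc).trans ?_
    refine setIntegral_mono_set hfi.norm (ae_of_all _ fun _ => norm_nonneg _) ?_
    exact (uIoc_subset_uIcc.trans (uIcc_subset_Icc hz hx)).eventuallyLE
  have i1 : IntegrableOn (fun z => ‖qpPrimitive a f z‖ ^ 2) (Icc (0:ℝ) 1) :=
    ((continuousOn_qpPrimitive hfi a).norm.pow 2).integrableOn_Icc
  have h2 : ∫ z in Icc (0:ℝ) 1, ‖qpPrimitive a f x‖ ^ 2 ≤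
      ∫ z in Icc (0:ℝ) 1, (2 * ‖qpPrimitive a f z‖ ^ 2 + 2 * N) :=
    setIntegral_mono_on (integrable_const _) ((i1.const_mul _).add (integrable_const _))
      measurableSet_Icc fun z hz => by
        have h3 : ‖qpPrimitive a f x‖ ≤ ‖qpPrimitive a f z‖ + S := by
          have := norm_le_norm_add_norm_sub' (qpPrimitive a f x) (qpPrimitive a f z)
          linarith [hdiff z hz]
        have h4 := pow_le_pow_left₀ (norm_nonneg _) h3 2
        nlinarith [sq_nonneg (‖qpPrimitive a f z‖ - S)]
  rw [integral_add (i1.const_mul _) (integrable_const _), integral_const_mul] at h2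
  simpa using h2

lemma exists_truncation (hq : IntegrableOn q (Icc (0:ℝ) 1)) {ε : ℝ} (hε : 0 < ε) :
    ∃ K : ℝ, 0 ≤ K ∧ ∫ x in Icc (0:ℝ) 1, max (|q x| - K) 0 ≤ ε := by
  have h1 : Tendsto (fun n : ℕ => ∫ x in Icc (0:ℝ) 1, max (|q x| - n) 0) atTop
      (𝓝 (∫ x in Icc (0:ℝ) 1, (0:ℝ))) := by
    refine tendsto_integral_of_dominated_convergence (fun x => |q x|) (fun n => ?_) hq.abs
      (fun n => ae_of_all _ fun x => ?_) (ae_of_all _ fun x => ?_)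
    · exact ((hq.abs.sub (integrable_const _)).sup (integrable_const 0)).1
    · rw [Real.norm_eq_abs, abs_of_nonneg (le_max_right _ _)]
      exact max_le (by simp) (abs_nonneg _)
    · obtain ⟨m, hm⟩ := exists_nat_ge |q x|
      refine tendsto_const_nhds.congr' ?_
      filter_upwards [eventually_ge_atTop m] with n hn
      have : (m : ℝ) ≤ n := by exact_mod_cast hn
      rw [max_eq_right (by linarith)]
  simp only [integral_zero] at h1
  obtain ⟨n, hn⟩ := (h1.eventually_le_const hε).exists
  exact ⟨n, n.cast_nonneg, hn⟩

/-- The form controls the Dirichlet energy modulo the `L²` norm. -/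
lemma exists_coercive (hq : IntegrableOn q (Icc (0:ℝ) 1)) :
    ∃ C : ℝ, ∀ (a : ℂ) (f : ℝ → ℂ), MemLp f 2 (volume.restrict (Icc (0:ℝ) 1)) →
      ∫ x in Icc (0:ℝ) 1, ‖f x‖ ^ 2 ≤
        2 * qpForm q a f + C * ∫ x in Icc (0:ℝ) 1, ‖qpPrimitive a f x‖ ^ 2 := by
  obtain ⟨K, hK, hKq⟩ := exists_truncation hq (ε := 1 / 4) (by norm_num)
  refine ⟨2 * K + 1, fun a f hf => ?_⟩
  have hsup := fun x hx => norm_qpPrimitive_sq_le hf a (x := x) hx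
  have hcont := continuousOn_qpPrimitive hf.integrableOn_unit a
  have iD : IntegrableOn (fun z => ‖qpPrimitive a f z‖ ^ 2) (Icc (0:ℝ) 1) :=
    (hcont.norm.pow 2).integrableOn_Icc
  unfold qpForm
  set D := ∫ x in Icc (0:ℝ) 1, ‖qpPrimitive a f x‖ ^ 2
  set N := ∫ x in Icc (0:ℝ) 1, ‖f x‖ ^ 2
  have hD : 0 ≤ D := integral_nonneg fun _ => sq_nonneg _
  have hN : 0 ≤ N := integral_nonneg fun _ => sq_nonneg _
  have iR : IntegrableOn (fun x => max (|q x| - K) 0) (Icc (0:ℝ) 1) :=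
    (hq.abs.sub (integrable_const _)).sup (integrable_const 0)
  have h1 : ∫ x in Icc (0:ℝ) 1, -(q x * ‖qpPrimitive a f x‖ ^ 2) ≤
      ∫ x in Icc (0:ℝ) 1, (K * ‖qpPrimitive a f x‖ ^ 2 +
        max (|q x| - K) 0 * (2 * D + 2 * N)) :=
    setIntegral_mono_on (integrable_mul_norm_sq_unit hq hcont).neg
      ((iD.const_mul _).add (iR.mul_const _)) measurableSet_Icc fun x hx => by
        have h2 : -q x ≤ K + max (|q x| - K) 0 := by
          linarith [neg_le_abs (q x), le_max_left (|q x| - K) 0]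
        have h3 := mul_le_mul_of_nonneg_right h2 (sq_nonneg ‖qpPrimitive a f x‖)
        have h4 := mul_le_mul_of_nonneg_left (hsup x hx) (le_max_right (|q x| - K) 0)
        linarith
  rw [integral_neg, integral_add (iD.const_mul _) (iR.mul_const _), integral_const_mul,
    integral_mul_const] at h1
  have h5 := mul_le_mul_of_nonneg_right hKq (by positivity : 0 ≤ 2 * D + 2 * N)
  linarith

lemma qpPrimitive_const_mul (c a : ℂ) (f : ℝ → ℂ) (x : ℝ) :
    qpPrimitive (c * a) (fun s => c * f s) x = c * qpPrimitive a f x := by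
  simp only [qpPrimitive, intervalIntegral.integral_const_mul, mul_add]

lemma QPAdmissible.const_mul (hf : QPAdmissible t a f) (c : ℂ) :
    QPAdmissible t (c * a) (fun s => c * f s) where
  memLp := hf.memLp.const_mul c
  boundary := by rw [qpPrimitive_const_mul, hf.boundary]; ring

lemma qpForm_const_mul (q : ℝ → ℝ) (c a : ℂ) (f : ℝ → ℂ) :
    qpForm q (c * a) (fun s => c * f s) = ‖c‖ ^ 2 * qpForm q a f := by
  simp only [qpForm, qpPrimitive_const_mul, norm_mul, mul_pow, mul_left_comm (q _),
    integral_const_mul, mul_add]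

lemma integral_norm_qpPrimitive_const_mul (c a : ℂ) (f : ℝ → ℂ) :
    ∫ x in Icc (0:ℝ) 1, ‖qpPrimitive (c * a) (fun s => c * f s) x‖ ^ 2 =
      ‖c‖ ^ 2 * ∫ x in Icc (0:ℝ) 1, ‖qpPrimitive a f x‖ ^ 2 := by
  simp only [qpPrimitive_const_mul, norm_mul, mul_pow, integral_const_mul]

lemma qpForm_sub_const (hq : IntegrableOn q (Icc (0:ℝ) 1)) (hf : QPAdmissible t a f) (Λ : ℝ) :
    qpForm (fun x => q x - Λ) a f =
      qpForm q a f - Λ * ∫ x in Icc (0:ℝ) 1, ‖qpPrimitive a f x‖ ^ 2 := by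
  have iD : IntegrableOn (fun z => ‖qpPrimitive a f z‖ ^ 2) (Icc (0:ℝ) 1) :=
    (hf.continuousOn.norm.pow 2).integrableOn_Icc
  simp only [qpForm, sub_mul]
  rw [integral_sub (integrable_mul_norm_sq_unit hq hf.continuousOn) (iD.const_mul _),
    integral_const_mul]
  ring

/-- The quadratic form of the quasi-periodic problem attains its minimum on the unit sphere. -/
lemma exists_minimizer (hq : IntegrableOn q (Icc (0:ℝ) 1))
    (hne : ∃ a f, QPAdmissible t a f ∧ ∫ x in Icc (0:ℝ) 1, ‖qpPrimitive a f x‖ ^ 2 = 1) :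
    ∃ a f, QPAdmissible t a f ∧ ∫ x in Icc (0:ℝ) 1, ‖qpPrimitive a f x‖ ^ 2 = 1 ∧
      ∀ b g, QPAdmissible t b g → ∫ x in Icc (0:ℝ) 1, ‖qpPrimitive b g x‖ ^ 2 = 1 →
        qpForm q a f ≤ qpForm q b g := by
  obtain ⟨C, hC⟩ := exists_coercive hq
  set S : Set ℝ := {r | ∃ a f, QPAdmissible t a f ∧
    ∫ x in Icc (0:ℝ) 1, ‖qpPrimitive a f x‖ ^ 2 = 1 ∧ qpForm q a f = r} with hS
  have hSne : S.Nonempty := by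
    obtain ⟨a, f, h1, h2⟩ := hne
    exact ⟨_, a, f, h1, h2, rfl⟩
  have hSb : BddBelow S := by
    refine ⟨-C / 2, ?_⟩
    rintro _ ⟨a, f, h1, h2, rfl⟩
    have h3 := hC a f h1.memLp
    have h4 : 0 ≤ ∫ x in Icc (0:ℝ) 1, ‖f x‖ ^ 2 := integral_nonneg fun _ => sq_nonneg _
    rw [h2] at h3
    linarith
  obtain ⟨u, hanti, hlim, hmem⟩ := exists_seq_tendsto_sInf hSne hSb
  choose a f hadm hnorm hform using hmem
  have hN : ∀ n, ∫ x in Icc (0:ℝ) 1, ‖f n x‖ ^ 2 ≤ 2 * u 0 + C := fun n => by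
    have h3 := hC (a n) (f n) (hadm n).memLp
    rw [hnorm, hform] at h3
    linarith [hanti n.zero_le]
  set M := 2 + 2 * (2 * u 0 + C) with hM
  have hsup : ∀ n, ∀ x ∈ Icc (0:ℝ) 1, ‖qpPrimitive (a n) (f n) x‖ ^ 2 ≤ M := fun n x hx => by
    have h3 := norm_qpPrimitive_sq_le (hadm n).memLp (a n) hx
    rw [hnorm] at h3
    linarith [hN n]
  obtain ⟨F, φ, hF, hφ, hprim, hlsc⟩ := exists_subseq_tendsto_primitive
    (fun n => (hadm n).memLp) hN
  obtain ⟨A, -, ψ, hψ, hA⟩ := tendsto_subseq_of_bounded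
    (Metric.isBounded_closedBall (x := (0:ℂ)) (r := √M)) (x := fun n => a (φ n)) fun n => by
      rw [mem_closedBall_zero_iff]
      apply Real.le_sqrt_of_sq_le
      simpa [qpPrimitive_zero] using hsup (φ n) 0 (by simp)
  have hy : ∀ x ∈ Icc (0:ℝ) 1, Tendsto (fun n => qpPrimitive (a (φ (ψ n))) (f (φ (ψ n))) x) atTop
      (𝓝 (qpPrimitive A F x)) := fun x hx =>
    hA.add ((hprim x hx).comp hψ.tendsto_atTop)
  have hadmA : QPAdmissible t A F := by
    refine ⟨hF, tendsto_nhds_unique (hy 1 (by simp)) ?_⟩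
    simp only [(hadm _).boundary]
    exact hA.const_mul _
  have hdom : ∀ p : ℝ → ℝ, IntegrableOn p (Icc (0:ℝ) 1) →
      Tendsto (fun n => ∫ x in Icc (0:ℝ) 1, p x * ‖qpPrimitive (a (φ (ψ n))) (f (φ (ψ n))) x‖ ^ 2)
        atTop (𝓝 (∫ x in Icc (0:ℝ) 1, p x * ‖qpPrimitive A F x‖ ^ 2)) := by
    intro p hp
    refine tendsto_integral_of_dominated_convergence (fun x => |p x| * M)
      (fun n => (integrable_mul_norm_sq_unit hp (hadm _).continuousOn).1) (hp.abs.mul_const _)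
      (fun n => (ae_restrict_iff' measurableSet_Icc).2 (ae_of_all _ fun x hx => ?_))
      ((ae_restrict_iff' measurableSet_Icc).2 (ae_of_all _ fun x hx => ?_))
    · rw [norm_mul, Real.norm_eq_abs, Real.norm_of_nonneg (sq_nonneg _)]
      exact mul_le_mul_of_nonneg_left (hsup _ x hx) (abs_nonneg _)
    · exact ((hy x hx).norm.pow 2).const_mul _
  have hD : ∫ x in Icc (0:ℝ) 1, ‖qpPrimitive A F x‖ ^ 2 = 1 := by
    have h1 := hdom (fun _ => 1) (integrable_const _)
    simp only [one_mul, hnorm] at h1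
    exact tendsto_nhds_unique h1 tendsto_const_nhds
  have hen : Tendsto (fun n => ∫ x in Icc (0:ℝ) 1, ‖f (φ (ψ n)) x‖ ^ 2) atTop
      (𝓝 (sInf S - ∫ x in Icc (0:ℝ) 1, q x * ‖qpPrimitive A F x‖ ^ 2)) := by
    refine (((hlim.comp (hφ.comp hψ).tendsto_atTop).sub (hdom q hq))).congr fun n => ?_
    simp only [Function.comp_apply, ← hform, qpForm]
    ring
  refine ⟨A, F, hadmA, hD, fun b g hb hbg => ?_⟩
  have h1 := hlsc ψ _ hψ hen
  have h2 : sInf S ≤ qpForm q b g := csInf_le hSb ⟨b, g, hb, hbg, rfl⟩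
  unfold qpForm at h2 ⊢
  linarith

lemma qpForm_sub_nonneg (hq : IntegrableOn q (Icc (0:ℝ) 1)) {Λ : ℝ}
    (hmin : ∀ b g, QPAdmissible t b g → ∫ x in Icc (0:ℝ) 1, ‖qpPrimitive b g x‖ ^ 2 = 1 →
      Λ ≤ qpForm q b g) (hf : QPAdmissible t a f) :
    0 ≤ qpForm (fun x => q x - Λ) a f := by
  rw [qpForm_sub_const hq hf]
  set D := ∫ x in Icc (0:ℝ) 1, ‖qpPrimitive a f x‖ ^ 2 with hDdef
  have hD0 : 0 ≤ D := integral_nonneg fun _ => sq_nonneg _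
  rcases hD0.eq_or_lt with hD | hD
  · obtain ⟨C, hC⟩ := exists_coercive hq
    have h1 := hC a f hf.memLp
    have h2 : 0 ≤ ∫ x in Icc (0:ℝ) 1, ‖f x‖ ^ 2 := integral_nonneg fun _ => sq_nonneg _
    rw [← hDdef, ← hD, mul_zero] at h1
    rw [← hD]
    linarith
  · have hc : ‖(((√D)⁻¹ : ℝ) : ℂ)‖ ^ 2 = D⁻¹ := by
      rw [Complex.norm_real, Real.norm_of_nonneg (by positivity), inv_pow, Real.sq_sqrt hD0]
    have h1 := hmin _ _ (hf.const_mul (((√D)⁻¹ : ℝ) : ℂ)) (by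
      rw [integral_norm_qpPrimitive_const_mul, hc, ← hDdef, inv_mul_cancel₀ hD.ne'])
    rw [qpForm_const_mul, hc, inv_mul_eq_div, le_div_iff₀ hD] at h1
    linarith

end Minimizer

section Conclusion

variable {q : ℝ → ℝ} {t : ℝ} {a : ℂ} {f : ℝ → ℂ}

/-- A normalized null vector of the nonnegative shifted form is an eigenfunction. -/
lemma isQPEigenvalue_of_null (hq : IntegrableOn q (Icc (0:ℝ) 1)) {Λ : ℝ}
    (hnonneg : ∀ (b : ℂ) (g : ℝ → ℂ), QPAdmissible t b g → 0 ≤ qpForm (fun x => q x - Λ) b g)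
    (hf : QPAdmissible t a f) (hzero : qpForm (fun x => q x - Λ) a f = 0)
    (hnorm : ∫ x in Icc (0:ℝ) 1, ‖qpPrimitive a f x‖ ^ 2 = 1) :
    IsQPEigenvalue q t Λ := by
  have hp : IntegrableOn (fun x => q x - Λ) (Icc (0:ℝ) 1) := hq.sub (integrable_const _)
  obtain ⟨c, hae, hbd⟩ := euler_lagrange hp hnonneg hf hzero
  set y := qpPrimitive a f with hy
  set h : ℝ → ℂ := fun s => ((q s - Λ : ℝ) : ℂ) * y s with hh
  have hhi : IntegrableOn h (Icc (0:ℝ) 1) :=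
    integrableOn_mul_continuousOn_unit hp.ofReal hf.continuousOn
  set g := qpPrimitive c h with hg
  have hgc : ContinuousOn g (Icc (0:ℝ) 1) := continuousOn_qpPrimitive hhi c
  have hg0 : g 0 = c := qpPrimitive_zero c h
  have hyg : ∀ x ∈ Icc (0:ℝ) 1, y x = a + ∫ s in (0:ℝ)..x, g s := by
    intro x hx
    rw [hy, qpPrimitive, intervalIntegral_eq_setIntegral_unit f hx,
      intervalIntegral_eq_setIntegral_unit g hx]
    exact congrArg (a + ·) (integral_congr_ae (ae_restrict_of_ae hae))
  refine ⟨y, g, h, ?_, fun x hx => ?_, hgc, hhi, fun x _ => by rw [hg0]; rfl, ?_, ?_, ?_⟩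
  · by_contra! hcon
    have : ∫ x in Icc (0:ℝ) 1, ‖y x‖ ^ 2 = 0 :=
      setIntegral_eq_zero_of_forall_eq_zero fun x hx => by simp [hcon x hx]
    rw [this] at hnorm
    exact zero_ne_one hnorm
  · have : Fact (x ∈ Icc (0:ℝ) 1) := ⟨hx⟩
    have h1 : HasDerivWithinAt (fun x => ∫ s in (0:ℝ)..x, g s) (g x) (Icc (0:ℝ) 1) x :=
      intervalIntegral.integral_hasDerivWithinAt_right
        (intervalIntegrable_of_mem_unit hgc.integrableOn_Icc hx)
        (hgc.stronglyMeasurableAtFilter_nhdsWithin measurableSet_Icc x) (hgc x hx)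
    exact (h1.const_add a).congr hyg (hyg x hx)
  · refine ae_of_all _ fun x => ?_
    simp only [hh]
    push_cast
    ring
  · rw [hy, hf.boundary, qpPrimitive_zero]
  · rw [hg0]
    exact hbd

lemma qpPrimitive_cexp (τ x : ℝ) :
    qpPrimitive 1 (fun s => Complex.I * τ * Complex.exp (Complex.I * τ * s)) x =
      Complex.exp (Complex.I * τ * x) := by
  have hd : ∀ s : ℝ, HasDerivAt (fun s : ℝ => Complex.exp (Complex.I * τ * s))
      (Complex.I * τ * Complex.exp (Complex.I * τ * s)) s := fun s => by
    have h1 : HasDerivAt (fun s : ℝ => Complex.I * τ * (s : ℂ)) (Complex.I * τ * 1) s :=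
      (Complex.ofRealCLM.hasDerivAt (x := s)).const_mul (Complex.I * (τ : ℂ))
    convert h1.cexp using 1
    ring
  unfold qpPrimitive
  rw [intervalIntegral.integral_eq_sub_of_hasDerivAt (fun s _ => hd s)
    (Continuous.intervalIntegrable (by fun_prop) _ _)]
  simp

lemma norm_cexp_I_mul (τ x : ℝ) : ‖Complex.exp (Complex.I * τ * x)‖ = 1 := by
  simp [Complex.norm_exp]

/-- A function with vanishing primitive on the unit interval vanishes almost everywhere. -/
lemma ae_eq_zero_of_primitive_eq_zero (hf : IntegrableOn f (Icc (0:ℝ) 1))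
    (h : ∀ x ∈ Icc (0:ℝ) 1, ∫ s in (0:ℝ)..x, f s = 0) :
    ∀ᵐ x ∂(volume.restrict (Icc (0:ℝ) 1)), f x = 0 := by
  have h1 := (intervalIntegrable_of_mem_unit hf (x := 1) (by simp)).ae_hasDerivAt_integral
  rw [uIcc_of_le zero_le_one] at h1
  rw [← restrict_Ioo_eq_restrict_Icc, ae_restrict_iff' measurableSet_Ioo]
  filter_upwards [h1] with x hx hx'
  have h2 := hx (Ioo_subset_Icc_self hx') 0 (by simp)
  refine h2.unique ((hasDerivAt_const x (0:ℂ)).congr_of_eventuallyEq ?_)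
  filter_upwards [Ioo_mem_nhds hx'.1 hx'.2] with s hs using h s (Ioo_subset_Icc_self hs)

lemma qpAdmissible_cexp {τ : ℝ} (hτ : Complex.exp (Complex.I * τ) = Complex.exp (Complex.I * t)) :
    QPAdmissible t 1 (fun s => Complex.I * τ * Complex.exp (Complex.I * τ * s)) where
  memLp := by
    have hc : Continuous fun s : ℝ => Complex.I * τ * Complex.exp (Complex.I * τ * s) := by fun_prop
    rw [memLp_two_iff_integrable_sq_norm hc.aestronglyMeasurable]
    exact (hc.norm.pow 2).continuousOn.integrableOn_Icc
  boundary := by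
    rw [qpPrimitive_cexp, ← hτ]
    simp

lemma integral_norm_cexp_sq (τ : ℝ) :
    ∫ x in Icc (0:ℝ) 1, ‖qpPrimitive 1
      (fun s => Complex.I * τ * Complex.exp (Complex.I * τ * s)) x‖ ^ 2 = 1 := by
  simp only [qpPrimitive_cexp, norm_cexp_I_mul]
  simp

lemma qpForm_cexp (q : ℝ → ℝ) (τ : ℝ) :
    qpForm q 1 (fun s => Complex.I * τ * Complex.exp (Complex.I * τ * s)) =
      τ ^ 2 + ∫ s in Icc (0:ℝ) 1, q s := by
  simp only [qpForm, qpPrimitive_cexp, norm_mul, norm_cexp_I_mul]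
  simp

/-- If the lowest free exponential realizes the bottom of the form, the potential vanishes. -/
lemma ae_eq_zero_of_cexp_null (hq : IntegrableOn q (Icc (0:ℝ) 1)) {τ : ℝ}
    (hτ : Complex.exp (Complex.I * τ) = Complex.exp (Complex.I * t))
    (hmean : ∫ s in Icc (0:ℝ) 1, q s = 0)
    (hnonneg : ∀ (b : ℂ) (g : ℝ → ℂ), QPAdmissible t b g → 0 ≤ qpForm (fun x => q x - τ ^ 2) b g) :
    ∀ᵐ x ∂(volume.restrict (Icc (0:ℝ) 1)), q x = 0 := by
  set e : ℝ → ℂ := fun s => Complex.exp (Complex.I * τ * s) with he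
  have hec : Continuous e := by fun_prop
  have hadm := qpAdmissible_cexp hτ
  have hp : IntegrableOn (fun x => q x - τ ^ 2) (Icc (0:ℝ) 1) := hq.sub (integrable_const _)
  have hzero : qpForm (fun x => q x - τ ^ 2) 1 (fun s => Complex.I * τ * e s) = 0 := by
    rw [qpForm_sub_const hq hadm, integral_norm_cexp_sq, qpForm_cexp, hmean]
    ring
  obtain ⟨c, hae, -⟩ := euler_lagrange hp hnonneg hadm hzero
  simp only [qpPrimitive_cexp] at hae
  have hqe : IntegrableOn (fun s => (q s : ℂ) * e s) (Icc (0:ℝ) 1) :=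
    integrableOn_mul_continuousOn_unit hq.ofReal hec.continuousOn
  have hpe : IntegrableOn (fun s => ((q s - τ ^ 2 : ℝ) : ℂ) * e s) (Icc (0:ℝ) 1) :=
    integrableOn_mul_continuousOn_unit hp.ofReal hec.continuousOn
  have heq : EqOn (fun s => Complex.I * τ * e s)
      (qpPrimitive c fun s => ((q s - τ ^ 2 : ℝ) : ℂ) * e s) (Icc (0:ℝ) 1) :=
    Measure.eqOn_Icc_of_ae_eq volume zero_ne_one hae (by fun_prop)
      (continuousOn_qpPrimitive hpe c)
  have hc : Complex.I * τ = c := by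
    have := heq (show (0:ℝ) ∈ Icc (0:ℝ) 1 by simp)
    simpa [qpPrimitive_zero, he] using this
  have hqe0 := ae_eq_zero_of_primitive_eq_zero hqe fun x hx => by
    have h1 := heq hx
    have h2 : qpPrimitive 1 (fun s => Complex.I * τ * e s) x = e x := qpPrimitive_cexp τ x
    simp only [qpPrimitive] at h1 h2
    have h3 : ∫ s in (0:ℝ)..x, ((q s - τ ^ 2 : ℝ) : ℂ) * e s =
        (∫ s in (0:ℝ)..x, (q s : ℂ) * e s) - τ ^ 2 * ∫ s in (0:ℝ)..x, e s := by
      rw [← intervalIntegral.integral_const_mul, ← intervalIntegral.integral_sub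
        (intervalIntegrable_of_mem_unit hqe hx)
        ((hec.intervalIntegrable _ _).const_mul _)]
      congr 1 with s
      push_cast
      ring
    rw [intervalIntegral.integral_const_mul] at h2
    rw [h3, ← hc] at h1
    linear_combination -h1 - Complex.I * τ * h2 + τ ^ 2 * (∫ s in (0:ℝ)..x, e s) * Complex.I_sq
  filter_upwards [hqe0] with x hx
  simpa [he, Complex.exp_ne_zero] using hx

end Conclusion

/-- Ambarzumyan-type theorem for `L_t(q)` using the eigenvalues `(2nπ+t)²`. -/
theorem ambarzumyan_quasiPeriodic_plus
    (q : ℝ → ℝ) (hq : IntegrableOn q (Icc (0:ℝ) 1))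
    (t : ℝ) (ht : t ∈ Ico (0:ℝ) (2 * Real.pi))
    (hlow : ∀ lam : ℂ, IsQPEigenvalue q t lam →
      ∃ r : ℝ, lam = (r : ℂ) ∧ min (t ^ 2) ((2 * Real.pi - t) ^ 2) ≤ r)
    (hspec : ∀ n : ℕ, 1 ≤ n →
      IsQPEigenvalue q t (((2 * n * Real.pi + t) ^ 2 : ℝ) : ℂ)) :
    ∀ᵐ x ∂(volume.restrict (Icc (0:ℝ) 1)), q x = 0 := by
  have hmean := integral_potential_eq_zero hq hspec
  obtain ⟨τ, hτ, hτm⟩ : ∃ τ : ℝ, Complex.exp (Complex.I * τ) = Complex.exp (Complex.I * t) ∧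
      τ ^ 2 = min (t ^ 2) ((2 * Real.pi - t) ^ 2) := by
    rcases min_choice (t ^ 2) ((2 * Real.pi - t) ^ 2) with h | h
    · exact ⟨t, rfl, h.symm⟩
    · refine ⟨t - 2 * Real.pi, ?_, by rw [h]; ring⟩
      rw [Complex.exp_eq_exp_iff_exists_int]
      refine ⟨-1, ?_⟩
      push_cast
      ring
  have hadm := qpAdmissible_cexp hτ
  obtain ⟨a, f, hf, hnorm, hmin⟩ := exists_minimizer hq ⟨_, _, hadm, integral_norm_cexp_sq τ⟩
  have hle := hmin _ _ hadm (integral_norm_cexp_sq τ)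
  rw [qpForm_cexp, hmean, add_zero] at hle
  have hnonneg := fun b g hb => qpForm_sub_nonneg (a := b) (f := g) hq hmin hb
  have hzero : qpForm (fun x => q x - qpForm q a f) a f = 0 := by
    rw [qpForm_sub_const hq hf, hnorm, mul_one, sub_self]
  obtain ⟨r, hr, hmr⟩ := hlow _ (isQPEigenvalue_of_null hq hnonneg hf hzero hnorm)
  rw [← hτm, ← Complex.ofReal_inj.1 hr] at hmr
  rw [le_antisymm hle hmr] at hnonneg
  exact ae_eq_zero_of_cexp_null hq hτ hmean hnonneg
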